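/- The Leibniz algebra R(μ₁,k) with basis {e₁,…,e_{n-2k}, f₁,…,f_{2k}, x₁,…,x_k} and non-zero products [eᵢ,e₁] = e_{i+1} (1 ≤ i ≤ n-2k-1), [e₁,fⱼ] = f_{k+j} (1 ≤ j ≤ k), [eᵢ,xⱼ] = Σ_{t=i+1}^{n-2k} a_{t-i+1,j} e_t, [fᵢ,xᵢ] = fᵢ, [f_{k+i},xᵢ] = f_{k+i}, [xᵢ,fᵢ] = -fᵢ, [xᵢ,fⱼ] = φ_{i,j} f_{k+j} (i ≠ j), [xᵢ,xⱼ] = δ_{i,j} e_{n-2k}, satisfies the Leibniz identity for all choices of parameters a_{t,j}, φ_{i,j}, δ_{i,j} ∈ ℂ. -/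

import Mathlib

noncomputable section

open Finset

/-- Underlying space of `R(μ₁,k)`: basis `e₁,…,e_{n-2k}`, `f₁,…,f_{2k}`,
`x₁,…,x_k`. -/
abbrev LRmu1 (n k : ℕ) := (Fin (n - 2 * k) ⊕ (Fin (2 * k) ⊕ Fin k)) → ℂ

/-- `1`-indexed basis vector `eᵢ` (zero out of range). -/
def Eb (n k : ℕ) (i : ℕ) : LRmu1 n k := fun s =>
  match s with
  | .inl a => if (a : ℕ) + 1 = i then 1 else 0
  | _ => 0

/-- `1`-indexed basis vector `fᵢ` (zero out of range). -/
def Fb (n k : ℕ) (i : ℕ) : LRmu1 n k := fun s =>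
  match s with
  | .inr (.inl a) => if (a : ℕ) + 1 = i then 1 else 0
  | _ => 0

/-- Structure constants of `R(μ₁,k)(a,φ,δ)`:
`[eᵢ,e₁] = e_{i+1}` (1 ≤ i ≤ n-2k-1), `[e₁,fⱼ] = f_{k+j}` (1 ≤ j ≤ k),
`[eᵢ,xⱼ] = Σ_{t=i+1}^{n-2k} a_{t-i+1,j} e_t`, `[fᵢ,xᵢ] = fᵢ`,
`[f_{k+i},xᵢ] = f_{k+i}`, `[xᵢ,fᵢ] = -fᵢ`, `[xᵢ,fⱼ] = φ_{i,j} f_{k+j}` (i ≠ j),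
`[xᵢ,xⱼ] = δ_{i,j} e_{n-2k}`. -/
def cRμ1 (n k : ℕ) (a φ δ : ℕ → ℕ → ℂ) :
    (Fin (n - 2 * k) ⊕ (Fin (2 * k) ⊕ Fin k)) →
      (Fin (n - 2 * k) ⊕ (Fin (2 * k) ⊕ Fin k)) → LRmu1 n k
  | .inl p, .inl q => if (q : ℕ) = 0 then Eb n k ((p : ℕ) + 2) else 0
  | .inl p, .inr (.inl q) =>
      if (p : ℕ) = 0 ∧ (q : ℕ) < k then Fb n k ((q : ℕ) + 1 + k) else 0
  | .inl p, .inr (.inr q) =>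
      ∑ t ∈ Finset.Icc ((p : ℕ) + 2) (n - 2 * k), a (t - (p : ℕ)) ((q : ℕ) + 1) • Eb n k t
  | .inr (.inl p), .inr (.inr q) =>
      if (p : ℕ) = (q : ℕ) ∨ (p : ℕ) = (q : ℕ) + k then Fb n k ((p : ℕ) + 1) else 0
  | .inr (.inr p), .inr (.inl q) =>
      if (p : ℕ) = (q : ℕ) then -Fb n k ((q : ℕ) + 1)
      else if (q : ℕ) < k then φ ((p : ℕ) + 1) ((q : ℕ) + 1) • Fb n k ((q : ℕ) + 1 + k) else 0
  | .inr (.inr p), .inr (.inr q) => δ ((p : ℕ) + 1) ((q : ℕ) + 1) • Eb n k (n - 2 * k)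
  | _, _ => 0

/-- Bracket of `R(μ₁,k)(a,φ,δ)`. -/
def brkRμ1 (n k : ℕ) (a φ δ : ℕ → ℕ → ℂ) (x y : LRmu1 n k) : LRmu1 n k :=
  ∑ i, ∑ j, (x i * y j) • cRμ1 n k a φ δ i j

/-- The bracket as a bilinear map. -/
def brkLin (n k : ℕ) (a φ δ : ℕ → ℕ → ℂ) : LRmu1 n k →ₗ[ℂ] LRmu1 n k →ₗ[ℂ] LRmu1 n k :=
  LinearMap.mk₂ ℂ (brkRμ1 n k a φ δ)
    (by intro x y z; simp [brkRμ1, add_mul, add_smul, Finset.sum_add_distrib])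
    (by intro c x y; simp [brkRμ1, mul_assoc, mul_smul, Finset.smul_sum])
    (by intro x y z; simp [brkRμ1, mul_add, add_smul, Finset.sum_add_distrib])
    (by intro c x y; simp [brkRμ1, mul_left_comm, mul_smul, Finset.smul_sum])

/-- The basis vector `x_{q+1}`. -/
def Xb (n k : ℕ) (q : Fin k) : LRmu1 n k := Pi.single (.inr (.inr q)) 1

lemma brkLin_single (n k : ℕ) (a φ δ : ℕ → ℕ → ℂ) (i j) :
    brkLin n k a φ δ (Pi.single i 1) (Pi.single j 1) = cRμ1 n k a φ δ i j := by
  simp only [brkLin, LinearMap.mk₂_apply, brkRμ1]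
  rw [Finset.sum_eq_single i, Finset.sum_eq_single j]
  · simp
  · intro b _ hb; simp [hb]
  · simp
  · intro b _ hb; simp [hb]
  · simp

lemma Eb_eq (n k : ℕ) (p : Fin (n - 2 * k)) :
    Eb n k (p + 1) = Pi.single (.inl p) 1 := by
  funext s
  rcases s with s | s | s <;> simp [Eb, Pi.single_apply, Fin.ext_iff]

lemma Fb_eq (n k : ℕ) (p : Fin (2 * k)) :
    Fb n k (p + 1) = Pi.single (.inr (.inl p)) 1 := by
  funext s
  rcases s with s | s | s <;> simp [Fb, Pi.single_apply, Fin.ext_iff]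

lemma Eb_zero (n k m : ℕ) (h : n - 2 * k < m) : Eb n k m = 0 := by
  funext s
  rcases s with s | s | s <;> simp [Eb]
  omega

lemma Fb_zero (n k m : ℕ) (h : m = 0 ∨ 2 * k < m) : Fb n k m = 0 := by
  funext s
  rcases s with s | s | s <;> simp [Fb]
  omega

lemma Eb_cases (n k m : ℕ) : (∃ p : Fin (n - 2 * k), m + 1 = p + 1) ∨ n - 2 * k < m + 1 := by
  by_cases h : m < n - 2 * k
  · exact .inl ⟨⟨m, h⟩, rfl⟩
  · right; omega

lemma Fb_cases (k m : ℕ) : (∃ p : Fin (2 * k), m = p + 1) ∨ (m = 0 ∨ 2 * k < m) := by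
  by_cases h : m = 0 ∨ 2 * k < m
  · exact .inr h
  · exact .inl ⟨⟨m - 1, by omega⟩, by simp; omega⟩

section
variable (n k : ℕ) (a φ δ : ℕ → ℕ → ℂ)

lemma B_EE (m j : ℕ) : brkLin n k a φ δ (Eb n k (m + 1)) (Eb n k (j + 1)) =
    if j = 0 then Eb n k (m + 2) else 0 := by
  rcases Eb_cases n k m with ⟨p, hp⟩ | h
  · rcases Eb_cases n k j with ⟨q, hq⟩ | h'
    · obtain rfl : m = p := by omega
      obtain rfl : j = q := by omega
      rw [Eb_eq, Eb_eq, brkLin_single]; rfl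
    · have := p.2
      rw [Eb_zero n k _ h', if_neg (by omega)]; simp
  · rw [Eb_zero n k _ h, Eb_zero n k (m + 2) (by omega)]; simp

lemma B_EF (hn : 2 * k + 4 ≤ n) (m j : ℕ) :
    brkLin n k a φ δ (Eb n k (m + 1)) (Fb n k j) =
    if m = 0 ∧ 1 ≤ j ∧ j ≤ k then Fb n k (j + k) else 0 := by
  rcases Eb_cases n k m with ⟨p, hp⟩ | h
  · rcases Fb_cases k j with ⟨q, hq⟩ | h'
    · obtain rfl : m = p := by omega
      subst hq
      rw [Eb_eq, Fb_eq, brkLin_single]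
      simp [cRμ1, Nat.succ_le_iff]
    · rw [Fb_zero n k _ h', if_neg (by omega)]; simp
  · rw [Eb_zero n k _ h, if_neg (by omega)]; simp

lemma B_EX (m : ℕ) (q : Fin k) :
    brkLin n k a φ δ (Eb n k (m + 1)) (Xb n k q) =
    ∑ r ∈ Finset.range (n - 2 * k), a (r + 2) (q + 1) • Eb n k (m + r + 2) := by
  rcases Eb_cases n k m with ⟨p, hp⟩ | h
  · obtain rfl : m = p := by omega
    rw [Eb_eq, Xb, brkLin_single]
    simp only [cRμ1]
    have hIcc : Finset.Icc ((p : ℕ) + 2) (n - 2 * k) = Finset.Ico ((p : ℕ) + 2) (n - 2 * k + 1) := by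
      ext t; simp only [Finset.mem_Icc, Finset.mem_Ico]; omega
    rw [hIcc, Finset.sum_Ico_eq_sum_range]
    have h2 : ∀ r, a ((p : ℕ) + 2 + r - p) (q + 1) • Eb n k ((p : ℕ) + 2 + r)
        = a (r + 2) (q + 1) • Eb n k (p + r + 2) := by
      intro r
      rw [show (p : ℕ) + 2 + r - p = r + 2 by omega, show (p : ℕ) + 2 + r = p + r + 2 by omega]
    simp only [h2]
    apply Finset.sum_subset
    · intro r hr; simp only [Finset.mem_range] at *; omega
    · intro r _ hr
      simp only [Finset.mem_range] at hr
      rw [Eb_zero n k _ (by omega), smul_zero]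
  · rw [Eb_zero n k _ h, Finset.sum_eq_zero]
    · simp
    · intro r _
      rw [Eb_zero n k _ (by omega), smul_zero]

lemma B_FE (m j : ℕ) : brkLin n k a φ δ (Fb n k m) (Eb n k (j + 1)) = 0 := by
  rcases Fb_cases k m with ⟨p, rfl⟩ | h
  · rcases Eb_cases n k j with ⟨q, hq⟩ | h'
    · rw [hq, Eb_eq, Fb_eq, brkLin_single]; rfl
    · rw [Eb_zero n k _ h']; simp
  · rw [Fb_zero n k _ h]; simp

lemma B_FF (m j : ℕ) : brkLin n k a φ δ (Fb n k m) (Fb n k j) = 0 := by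
  rcases Fb_cases k m with ⟨p, rfl⟩ | h
  · rcases Fb_cases k j with ⟨q, rfl⟩ | h'
    · rw [Fb_eq, Fb_eq, brkLin_single]; rfl
    · rw [Fb_zero n k _ h']; simp
  · rw [Fb_zero n k _ h]; simp

lemma B_FX (m : ℕ) (q : Fin k) : brkLin n k a φ δ (Fb n k m) (Xb n k q) =
    if m = q + 1 ∨ m = q + 1 + k then Fb n k m else 0 := by
  rcases Fb_cases k m with ⟨p, rfl⟩ | h
  · rw [Fb_eq, Xb, brkLin_single]
    simp only [cRμ1, Fb_eq]
    congr 1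
    apply propext
    omega
  · rw [Fb_zero n k _ h]; simp

lemma B_XE (p : Fin k) (j : ℕ) : brkLin n k a φ δ (Xb n k p) (Eb n k (j + 1)) = 0 := by
  rcases Eb_cases n k j with ⟨q, hq⟩ | h'
  · rw [hq, Eb_eq, Xb, brkLin_single]; rfl
  · rw [Eb_zero n k _ h']; simp

lemma B_XF (p : Fin k) (m : ℕ) : brkLin n k a φ δ (Xb n k p) (Fb n k m) =
    if m = p + 1 then - Fb n k m else if 1 ≤ m ∧ m ≤ k then φ (p + 1) m • Fb n k (m + k)
    else 0 := by
  rcases Fb_cases k m with ⟨q, rfl⟩ | h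
  · rw [Fb_eq, Xb, brkLin_single]
    simp [cRμ1, Fb_eq, Nat.succ_le_iff, eq_comm]
  · have := p.2
    rw [Fb_zero n k _ h, if_neg (by omega), if_neg (by omega)]; simp

lemma B_XX (p q : Fin k) : brkLin n k a φ δ (Xb n k p) (Xb n k q) =
    δ (p + 1) (q + 1) • Eb n k (n - 2 * k - 1 + 1) := by
  rw [Xb, Xb, brkLin_single]
  by_cases h : n - 2 * k = 0
  · simp only [cRμ1]
    rw [Eb_zero n k (n - 2 * k - 1 + 1) (by omega)]
    funext s
    rcases s with s | s | s <;> simp [Eb]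
    omega
  · rw [Nat.sub_add_cancel (by omega)]; rfl

lemma basis_cases (i : Fin (n - 2 * k) ⊕ (Fin (2 * k) ⊕ Fin k)) :
    (∃ p : ℕ, (Pi.single i 1 : LRmu1 n k) = Eb n k (p + 1)) ∨
    (∃ p : ℕ, 1 ≤ p ∧ p ≤ 2 * k ∧ (Pi.single i 1 : LRmu1 n k) = Fb n k p) ∨
    (∃ p : Fin k, (Pi.single i 1 : LRmu1 n k) = Xb n k p) := by
  rcases i with p | p | p
  · exact .inl ⟨p, (Eb_eq n k p).symm⟩
  · exact .inr (.inl ⟨p + 1, by omega, by omega, (Fb_eq n k p).symm⟩)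
  · exact .inr (.inr ⟨p, rfl⟩)

/-- Leibniz identity on a triple. -/
def LeibAt (x y z : LRmu1 n k) : Prop :=
  brkLin n k a φ δ x (brkLin n k a φ δ y z)
        = brkLin n k a φ δ (brkLin n k a φ δ x y) z
          - brkLin n k a φ δ (brkLin n k a φ δ x z) y

lemma leib_of_basis
    (h : ∀ i j l, LeibAt n k a φ δ (Pi.single i 1) (Pi.single j 1) (Pi.single l 1))
    (x y z : LRmu1 n k) : LeibAt n k a φ δ x y z := by
  have key : ∀ v : LRmu1 n k, v = ∑ i, v i • (Pi.single i 1 : LRmu1 n k) := by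
    intro v; exact pi_eq_sum_univ' v
  unfold LeibAt at *
  have h1 : ∀ i j, ∀ z : LRmu1 n k, LeibAt n k a φ δ (Pi.single i 1) (Pi.single j 1) z := by
    intro i j z
    unfold LeibAt
    rw [key z]
    simp only [map_sum, map_smul, LinearMap.sum_apply, LinearMap.smul_apply, h,
      Finset.sum_sub_distrib, smul_sub]
  unfold LeibAt at h1
  have h2 : ∀ i, ∀ y z : LRmu1 n k, LeibAt n k a φ δ (Pi.single i 1) y z := by
    intro i y z
    unfold LeibAt
    rw [key y]
    simp only [map_sum, map_smul, LinearMap.sum_apply, LinearMap.smul_apply, h1,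
      Finset.sum_sub_distrib, smul_sub]
  unfold LeibAt at h2
  rw [key x]
  simp only [map_sum, map_smul, LinearMap.sum_apply, LinearMap.smul_apply, h2,
      Finset.sum_sub_distrib, smul_sub]

lemma E_last (m : ℕ) : Eb n k (n - 2 * k - 1 + m + 2) = 0 := Eb_zero n k _ (by omega)

lemma leib_basis (hk : 1 ≤ k) (hn : 2 * k + 4 ≤ n) (i j l) :
    LeibAt n k a φ δ (Pi.single i 1) (Pi.single j 1) (Pi.single l 1) := by
  have hE0 : Eb n k (n - 2 * k - 1 + 2) = 0 := Eb_zero n k _ (by omega)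
  have hEF : ∀ j, brkLin n k a φ δ (Eb n k (n - 2 * k - 1 + 1)) (Fb n k j) = 0 := by
    intro j; rw [B_EF n k a φ δ hn, if_neg (by omega)]
  have hEF2 : ∀ m j, brkLin n k a φ δ (Eb n k (m + 2)) (Fb n k j) = 0 := by
    intro m j; rw [B_EF n k a φ δ hn (m + 1), if_neg (by omega)]
  have hEE2 : ∀ m j, brkLin n k a φ δ (Eb n k (m + 1)) (Eb n k (j + 2)) = 0 := by
    intro m j; rw [B_EE n k a φ δ m (j + 1), if_neg (by omega)]
  have hEEl : ∀ m, brkLin n k a φ δ (Eb n k (m + 1)) (Eb n k (n - 2 * k - 1 + 1)) = 0 := by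
    intro m; rw [B_EE, if_neg (by omega)]
  have hXE2 : ∀ p j, brkLin n k a φ δ (Xb n k p) (Eb n k (j + 2)) = 0 := by
    intro m j; rw [B_XE n k a φ δ m (j + 1)]
  have hFE2 : ∀ p j, brkLin n k a φ δ (Fb n k p) (Eb n k (j + 2)) = 0 := by
    intro m j; rw [B_FE n k a φ δ m (j + 1)]
  have hEE1 : ∀ m j, brkLin n k a φ δ (Eb n k (m + 2)) (Eb n k (j + 1)) =
    if j = 0 then Eb n k (m + 3) else 0 := fun m j => B_EE n k a φ δ (m + 1) j
  have hEX1 : ∀ m q, brkLin n k a φ δ (Eb n k (m + 2)) (Xb n k q) =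
    ∑ r ∈ Finset.range (n - 2 * k), a (r + 2) (q + 1) • Eb n k (m + 1 + r + 2) :=
      fun m j => B_EX n k a φ δ (m + 1) j
  rcases basis_cases n k i with ⟨p, hp⟩ | ⟨p, hp1, hp2, hp⟩ | ⟨p, hp⟩ <;>
  rcases basis_cases n k j with ⟨q, hq⟩ | ⟨q, hq1, hq2, hq⟩ | ⟨q, hq⟩ <;>
  rcases basis_cases n k l with ⟨r, hr⟩ | ⟨r, hr1, hr2, hr⟩ | ⟨r, hr⟩ <;>
  rw [hp, hq, hr] <;> clear hp hq hr <;> unfold LeibAt <;>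
  simp only [B_EE, hEE2, hXE2, hFE2, hEE1, hEX1, hEEl, hE0, hEF, hEF2, E_last, B_EX, B_FE, B_FF, B_FX, B_XE, B_XX, map_sum, map_smul, LinearMap.sum_apply,
    LinearMap.smul_apply, smul_zero, Finset.sum_const_zero, sub_self, map_zero, LinearMap.zero_apply]
  case inl.inr.inr.inr.inr =>
    rw [eq_comm, sub_eq_zero]
    simp only [Finset.smul_sum, smul_smul]
    rw [Finset.sum_comm]
    refine Finset.sum_congr rfl fun x _ => Finset.sum_congr rfl fun y _ => ?_
    rw [mul_comm (a (y + 2) _), show p + y + 1 + x + 2 = p + x + 1 + y + 2 by omega]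
  case inl.inl.inr.inr =>
    by_cases hq : q = 0
    · simp only [hq, if_true, hEX1]
      rw [eq_comm, sub_eq_zero]
      refine Finset.sum_congr rfl fun x _ => ?_
      rw [show p + 1 + x + 2 = p + x + 3 by omega]
    · simp [hq]
  case inl.inr.inr.inl =>
    by_cases hq : r = 0
    · simp only [hq, if_true, hEX1]
      rw [eq_comm, sub_eq_zero]
      refine Finset.sum_congr rfl fun x _ => ?_
      rw [show p + 1 + x + 2 = p + x + 3 by omega]
    · simp [hq]
  all_goals
    try simp only [B_EE, hEE2, hXE2, hFE2, hEE1, hEX1, hEEl, hE0, hEF, hEF2, E_last, B_EX, B_FE,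
      B_FF, B_FX, B_XE, B_XX, B_XF, B_EF n k a φ δ hn, map_sum, map_smul, map_neg,
      LinearMap.neg_apply, LinearMap.sum_apply, LinearMap.smul_apply, smul_zero,
      Finset.sum_const_zero, sub_self, map_zero, LinearMap.zero_apply, neg_zero, ite_self,
      sub_zero, zero_sub, neg_neg]
  all_goals try split_ifs
  all_goals
    try simp only [B_EE, hEE2, hXE2, hFE2, hEE1, hEX1, hEEl, hE0, hEF, hEF2, E_last, B_EX, B_FE,
      B_FF, B_FX, B_XE, B_XX, B_XF, B_EF n k a φ δ hn, map_sum, map_smul, map_neg,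
      LinearMap.neg_apply, LinearMap.sum_apply, LinearMap.smul_apply, smul_zero,
      Finset.sum_const_zero, sub_self, map_zero, LinearMap.zero_apply, neg_zero, ite_self,
      sub_zero, zero_sub, neg_neg]
  all_goals try split_ifs
  all_goals first
    | done
    | rfl
    | omega
    | (exfalso; omega)
    | (simp; done)
    | skip
end

/-- The family `R(μ₁,k)(a,φ,δ)` satisfies the Leibniz identity for all choices
of the parameters `a_{t,j}`, `φ_{i,j}`, `δ_{i,j} ∈ ℂ`. -/
theorem Rmu1_is_Leibniz (n k : ℕ) (hk : 1 ≤ k) (hn : 2 * k + 4 ≤ n)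
    (a φ δ : ℕ → ℕ → ℂ) :
    ∀ x y z : LRmu1 n k,
      brkRμ1 n k a φ δ x (brkRμ1 n k a φ δ y z)
        = brkRμ1 n k a φ δ (brkRμ1 n k a φ δ x y) z
          - brkRμ1 n k a φ δ (brkRμ1 n k a φ δ x z) y := by
  intro x y z
  exact leib_of_basis n k a φ δ (leib_basis n k a φ δ hk hn) x y z

end
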